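/- arXiv:1511.03993 — 2 statements merged into one kernel-verified Lean document; each statement's English description precedes it below -/
import Mathlib

section
/- For each choice of sign e in {-1, +1}, the sextuple (u0, u1, u2, u3, x2, x3) given by x3 = (90 + e*sqrt(3585))/105, u0 = u1 = x3, u2 = u3 = (90 - e*sqrt(3585))/129 and x2 = 1 satisfies g0 = g1 = g2 = g3 = g4 = g5 = 0. (These are the two exact naturally reductive Einstein solutions on E6(3) in the case u2 = u3, coming from the roots of 105*x3^2 - 180*x3 + 43 = 0 together with 35*x3 + 43*u2 - 60 = 0.) -/
noncomputable def g0 (u0 u1 u2 u3 x2 x3 : ℝ) : ℝ :=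
  3*u0*u1*x2 ^ 2*x3 ^ 2 + 3*u0*u1*x2 ^ 2 + 6*u0*u1*x3 ^ 2 - 9*u1 ^ 2*x2 ^ 2*x3 ^ 2 - u1 ^ 2*x2 ^ 2 - 2*x2 ^ 2*x3 ^ 2

noncomputable def g1 (u0 u1 u2 u3 x2 x3 : ℝ) : ℝ :=
  9*u1 ^ 2*u2*x2 ^ 2*x3 ^ 2 + u1 ^ 2*u2*x2 ^ 2 - 6*u1*u2 ^ 2*x2 ^ 2*x3 ^ 2 - 3*u1*u2 ^ 2*x3 ^ 2 - 3*u1*x2 ^ 2*x3 ^ 2 + 2*u2*x2 ^ 2*x3 ^ 2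

noncomputable def g2 (u0 u1 u2 u3 x2 x3 : ℝ) : ℝ :=
  (u2 - u3)*(2*u2*u3*x2 ^ 2 + u2*u3 - x2 ^ 2)

noncomputable def g3 (u0 u1 u2 u3 x2 x3 : ℝ) : ℝ :=
  u0*u3*x2 ^ 2*x3 + 9*u1*u3*x2 ^ 2*x3 + 16*u2*u3*x2 ^ 2*x3 + 52*u3 ^ 2*x2 ^ 2*x3 + 18*u3 ^ 2*x3 + 24*u3*x2 ^ 3*x3 + 6*u3*x2 ^ 3 - 144*u3*x2 ^ 2*x3 + 6*u3*x2*x3 ^ 2 - 6*u3*x2 + 18*x2 ^ 2*x3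

noncomputable def g4 (u0 u1 u2 u3 x2 x3 : ℝ) : ℝ :=
  -u0*x2 ^ 2*x3 + 4*u0*x3 - 9*u1*x2 ^ 2*x3 - 16*u2*x2 ^ 2*x3 + 16*u2*x3 - 16*u3*x2 ^ 2*x3 + 16*u3*x3 - 48*x2 ^ 3*x3 - 18*x2 ^ 3 + 144*x2 ^ 2*x3 + 6*x2*x3 ^ 2 - 96*x2*x3 + 18*x2

noncomputable def g5 (u0 u1 u2 u3 x2 x3 : ℝ) : ℝ :=
  9*u0*x2 ^ 2 - 4*u0*x3 ^ 2 + 9*u1*x2 ^ 2 - 16*u2*x3 ^ 2 - 16*u3*x3 ^ 2 + 24*x2 ^ 3*x3 ^ 2 + 66*x2 ^ 3*x3 - 144*x2 ^ 2*x3 - 66*x2*x3 ^ 3 + 96*x2*x3 ^ 2 + 42*x2*x3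

theorem stmt17 :
    ∀ e : ℝ, (e = -1 ∨ e = 1) →
      ∀ x3 u u2 x2 : ℝ,
        x3 = (90 + e * Real.sqrt 3585) / 105 →
        u = x3 →
        u2 = (90 - e * Real.sqrt 3585) / 129 →
        x2 = 1 →
        (g0 u u u2 u2 x2 x3 = 0 ∧ g1 u u u2 u2 x2 x3 = 0 ∧ g2 u u u2 u2 x2 x3 = 0 ∧ g3 u u u2 u2 x2 x3 = 0 ∧ g4 u u u2 u2 x2 x3 = 0 ∧ g5 u u u2 u2 x2 x3 = 0) := by
  intro e he x u u2 x2 hx hu hu2 hx2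
  have hs : Real.sqrt 3585 ^ 2 = 3585 := Real.sq_sqrt (by norm_num)
  have he2 : e ^ 2 = 1 := by rcases he with h | h <;> rw [h] <;> norm_num
  have hes : (e * Real.sqrt 3585) ^ 2 = 3585 := by rw [mul_pow, hs, he2]; norm_num
  have h1 : 3 * x * u2 = 1 := by
    rw [hx, hu2]; linear_combination (-1 / 4515) * hes
  have h2 : 35 * x + 43 * u2 = 60 := by rw [hx, hu2]; ring
  clear hx hu2
  subst hu hx2
  have h3 : 105 * u ^ 2 - 180 * u + 43 = 0 := by
    linear_combination 3 * u * h2 - 43 * h1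
  unfold g0 g1 g2 g3 g4 g5
  refine ⟨by ring, ?_, by ring, ?_, by ring, ?_⟩
  · linear_combination (3 * u ^ 3 - 3 * u ^ 2 * u2) * h1
  · linear_combination (16 / 3 * u + 86 / 3 * u2 - 40) * h1 + 2 / 3 * h2
  · linear_combination (-2 / 3 * u) * h3 - 32 / 3 * u * h1
end

section
/- There exist five sextuples of real numbers (u0, u1, u2, u3, x2, x3) with u2 = u3 satisfying g0 = g1 = g2 = g3 = g4 = g5 = 0, one in each of the following boxes: (i) 0.19 < u0 < 0.20, 0.15 < u1 < 0.16, 0.17 < u2 = u3 < 0.18, 1.001 < x2 < 1.002, 0.186 < x3 < 0.187; (ii) 0.37 < u0 < 0.38, 0.21 < u1 < 0.22, 1.16 < u2 = u3 < 1.17, 1.008 < x2 < 1.009, 0.340 < x3 < 0.341; (iii) 0.84 < u0 < 0.85, 0.108 < u1 < 0.109, 0.178 < u2 = u3 < 0.179, 0.58 < x2 < 0.59, 1.14 < x3 < 1.15; (iv) 1.50 < u0 < 1.51, 1.40 < u1 < 1.41, 0.23 < u2 = u3 < 0.24, 1.05 < x2 < 1.06, 1.48 < x3 < 1.49; (v)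 2.36 < u0 < 2.37, 0.169 < u1 < 0.170, 0.26 < u2 = u3 < 0.27, 1.69 < x2 < 1.70, 2.35 < x3 < 2.36. (These give five non-isometric non-naturally reductive left-invariant Einstein metrics on E6 associated to the subgroup SU(3)xSU(3)xSU(2)xU(1).) -/
/-- The system with u2 = u3, in the variables (u0, u1, u2, x2, x3). -/
noncomputable def sysF (x : Fin 5 → ℝ) : Fin 5 → ℝ
  | 0 => 3*x 0*x 1*x 3^2*x 4^2 + 3*x 0*x 1*x 3^2 + 6*x 0*x 1*x 4^2 - 9*x 1^2*x 3^2*x 4^2 - 1*x 1^2*x 3^2 - 2*x 3^2*x 4^2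
  | 1 => 9*x 1^2*x 2*x 3^2*x 4^2 + 1*x 1^2*x 2*x 3^2 - 6*x 1*x 2^2*x 3^2*x 4^2 - 3*x 1*x 2^2*x 4^2 - 3*x 1*x 3^2*x 4^2 + 2*x 2*x 3^2*x 4^2
  | 2 => 1*x 0*x 2*x 3^2*x 4 + 9*x 1*x 2*x 3^2*x 4 + 68*x 2^2*x 3^2*x 4 + 18*x 2^2*x 4 + 24*x 2*x 3^3*x 4 + 6*x 2*x 3^3 - 144*x 2*x 3^2*x 4 + 6*x 2*x 3*x 4^2 - 6*x 2*x 3 + 18*x 3^2*x 4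
  | 3 => 0 - 1*x 0*x 3^2*x 4 + 4*x 0*x 4 - 9*x 1*x 3^2*x 4 - 32*x 2*x 3^2*x 4 + 32*x 2*x 4 - 48*x 3^3*x 4 - 18*x 3^3 + 144*x 3^2*x 4 + 6*x 3*x 4^2 - 96*x 3*x 4 + 18*x 3
  | 4 => 9*x 0*x 3^2 - 4*x 0*x 4^2 + 9*x 1*x 3^2 - 32*x 2*x 4^2 + 24*x 3^3*x 4^2 + 66*x 3^3*x 4 - 144*x 3^2*x 4 - 66*x 3*x 4^3 + 96*x 3*x 4^2 + 42*x 3*x 4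


/-- Positive part of the divided differences of the system. -/
noncomputable def Dp (x y : Fin 5 → ℝ) : Fin 5 → Fin 5 → ℝ
  | 0, 0 => 3*x 1*x 3^2*x 4^2 + 3*x 1*x 3^2 + 6*x 1*x 4^2
  | 0, 1 => 3*y 0*x 3^2*x 4^2 + 3*y 0*x 3^2 + 6*y 0*x 4^2
  | 0, 2 => 0
  | 0, 3 => 3*y 0*y 1*y 3*x 4^2 + 3*y 0*y 1*x 3*x 4^2 + 3*y 0*y 1*y 3 + 3*y 0*y 1*x 3
  | 0, 4 => 3*y 0*y 1*y 3^2*y 4 + 3*y 0*y 1*y 3^2*x 4 + 6*y 0*y 1*y 4 + 6*y 0*y 1*x 4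
  | 1, 0 => 0
  | 1, 1 => 9*y 1*x 2*x 3^2*x 4^2 + 9*x 1*x 2*x 3^2*x 4^2 + 1*y 1*x 2*x 3^2 + 1*x 1*x 2*x 3^2
  | 1, 2 => 9*y 1^2*x 3^2*x 4^2 + 1*y 1^2*x 3^2 + 2*x 3^2*x 4^2
  | 1, 3 => 9*y 1^2*y 2*y 3*x 4^2 + 9*y 1^2*y 2*x 3*x 4^2 + 1*y 1^2*y 2*y 3 + 1*y 1^2*y 2*x 3 + 2*y 2*y 3*x 4^2 + 2*y 2*x 3*x 4^2
  | 1, 4 => 9*y 1^2*y 2*y 3^2*y 4 + 9*y 1^2*y 2*y 3^2*x 4 + 2*y 2*y 3^2*y 4 + 2*y 2*y 3^2*x 4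
  | 2, 0 => 1*x 2*x 3^2*x 4
  | 2, 1 => 9*x 2*x 3^2*x 4
  | 2, 2 => 1*y 0*x 3^2*x 4 + 9*y 1*x 3^2*x 4 + 68*y 2*x 3^2*x 4 + 68*x 2*x 3^2*x 4 + 18*y 2*x 4 + 18*x 2*x 4 + 24*x 3^3*x 4 + 6*x 3^3 + 6*x 3*x 4^2
  | 2, 3 => 1*y 0*y 2*y 3*x 4 + 1*y 0*y 2*x 3*x 4 + 9*y 1*y 2*y 3*x 4 + 9*y 1*y 2*x 3*x 4 + 68*y 2^2*y 3*x 4 + 68*y 2^2*x 3*x 4 + 24*y 2*y 3^2*x 4 + 24*y 2*x 3*y 3*x 4 + 24*y 2*x 3^2*x 4 + 6*y 2*y 3^2 + 6*y 2*x 3*y 3 + 6*y 2*x 3^2 + 6*y 2*x 4^2 + 18*y 3*x 4 + 18*x 3*x 4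
  | 2, 4 => 1*y 0*y 2*y 3^2 + 9*y 1*y 2*y 3^2 + 68*y 2^2*y 3^2 + 18*y 2^2 + 24*y 2*y 3^3 + 6*y 2*y 3*y 4 + 6*y 2*y 3*x 4 + 18*y 3^2
  | 3, 0 => 4*x 4
  | 3, 1 => 0
  | 3, 2 => 32*x 4
  | 3, 3 => 144*y 3*x 4 + 144*x 3*x 4 + 6*x 4^2 + 18
  | 3, 4 => 4*y 0 + 32*y 2 + 144*y 3^2 + 6*y 3*y 4 + 6*y 3*x 4
  | 4, 0 => 9*x 3^2
  | 4, 1 => 9*x 3^2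
  | 4, 2 => 0
  | 4, 3 => 9*y 0*y 3 + 9*y 0*x 3 + 9*y 1*y 3 + 9*y 1*x 3 + 24*y 3^2*x 4^2 + 24*x 3*y 3*x 4^2 + 24*x 3^2*x 4^2 + 66*y 3^2*x 4 + 66*x 3*y 3*x 4 + 66*x 3^2*x 4 + 96*x 4^2 + 42*x 4
  | 4, 4 => 24*y 3^3*y 4 + 24*y 3^3*x 4 + 66*y 3^3 + 96*y 3*y 4 + 96*y 3*x 4 + 42*y 3


/-- Negative part of the divided differences of the system. -/
noncomputable def Dm (x y : Fin 5 → ℝ) : Fin 5 → Fin 5 → ℝ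
  | 0, 0 => 0
  | 0, 1 => 9*y 1*x 3^2*x 4^2 + 9*x 1*x 3^2*x 4^2 + 1*y 1*x 3^2 + 1*x 1*x 3^2
  | 0, 2 => 0
  | 0, 3 => 9*y 1^2*y 3*x 4^2 + 9*y 1^2*x 3*x 4^2 + 1*y 1^2*y 3 + 1*y 1^2*x 3 + 2*y 3*x 4^2 + 2*x 3*x 4^2
  | 0, 4 => 9*y 1^2*y 3^2*y 4 + 9*y 1^2*y 3^2*x 4 + 2*y 3^2*y 4 + 2*y 3^2*x 4
  | 1, 0 => 0
  | 1, 1 => 6*x 2^2*x 3^2*x 4^2 + 3*x 2^2*x 4^2 + 3*x 3^2*x 4^2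
  | 1, 2 => 6*y 1*y 2*x 3^2*x 4^2 + 6*y 1*x 2*x 3^2*x 4^2 + 3*y 1*y 2*x 4^2 + 3*y 1*x 2*x 4^2
  | 1, 3 => 6*y 1*y 2^2*y 3*x 4^2 + 6*y 1*y 2^2*x 3*x 4^2 + 3*y 1*y 3*x 4^2 + 3*y 1*x 3*x 4^2
  | 1, 4 => 6*y 1*y 2^2*y 3^2*y 4 + 6*y 1*y 2^2*y 3^2*x 4 + 3*y 1*y 2^2*y 4 + 3*y 1*y 2^2*x 4 + 3*y 1*y 3^2*y 4 + 3*y 1*y 3^2*x 4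
  | 2, 0 => 0
  | 2, 1 => 0
  | 2, 2 => 144*x 3^2*x 4 + 6*x 3
  | 2, 3 => 144*y 2*y 3*x 4 + 144*y 2*x 3*x 4 + 6*y 2
  | 2, 4 => 144*y 2*y 3^2
  | 3, 0 => 1*x 3^2*x 4
  | 3, 1 => 9*x 3^2*x 4
  | 3, 2 => 32*x 3^2*x 4
  | 3, 3 => 1*y 0*y 3*x 4 + 1*y 0*x 3*x 4 + 9*y 1*y 3*x 4 + 9*y 1*x 3*x 4 + 32*y 2*y 3*x 4 + 32*y 2*x 3*x 4 + 48*y 3^2*x 4 + 48*x 3*y 3*x 4 + 48*x 3^2*x 4 + 18*y 3^2 + 18*x 3*y 3 + 18*x 3^2 + 96*x 4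
  | 3, 4 => 1*y 0*y 3^2 + 9*y 1*y 3^2 + 32*y 2*y 3^2 + 48*y 3^3 + 96*y 3
  | 4, 0 => 4*x 4^2
  | 4, 1 => 0
  | 4, 2 => 32*x 4^2
  | 4, 3 => 144*y 3*x 4 + 144*x 3*x 4 + 66*x 4^3
  | 4, 4 => 4*y 0*y 4 + 4*y 0*x 4 + 32*y 2*y 4 + 32*y 2*x 4 + 144*y 3^2 + 66*y 3*y 4^2 + 66*y 3*x 4*y 4 + 66*y 3*x 4^2


lemma forall5 {p : Fin 5 → Prop} (h0 : p 0) (h1 : p 1) (h2 : p 2) (h3 : p 3) (h4 : p 4) :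
    ∀ i, p i := by
  intro i
  fin_cases i <;> assumption

lemma sysF_sub (x y : Fin 5 → ℝ) (i : Fin 5) :
    sysF x i - sysF y i = ∑ j, (Dp x y i j - Dm x y i j) * (x j - y j) := by
  rw [Fin.sum_univ_five]
  revert i
  apply forall5 <;> simp only [sysF, Dp, Dm] <;> ring

set_option maxHeartbeats 2000000 in
lemma Dp_mono (x y x' y' : Fin 5 → ℝ) (hx : ∀ j, 0 ≤ x j) (hy : ∀ j, 0 ≤ y j)
    (hxx : ∀ j, x j ≤ x' j) (hyy : ∀ j, y j ≤ y' j) (i j : Fin 5) :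
    Dp x y i j ≤ Dp x' y' i j := by
  have hx' : ∀ j, 0 ≤ x' j := fun j => (hx j).trans (hxx j)
  have hy' : ∀ j, 0 ≤ y' j := fun j => (hy j).trans (hyy j)
  have a0 := hx 0
  have a1 := hx 1
  have a2 := hx 2
  have a3 := hx 3
  have a4 := hx 4
  have b0 := hy 0
  have b1 := hy 1
  have b2 := hy 2
  have b3 := hy 3
  have b4 := hy 4
  have c0 := hx' 0
  have c1 := hx' 1
  have c2 := hx' 2
  have c3 := hx' 3
  have c4 := hx' 4
  have d0 := hy' 0
  have d1 := hy' 1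
  have d2 := hy' 2
  have d3 := hy' 3
  have d4 := hy' 4
  revert i j
  apply forall5 <;> apply forall5 <;> simp only [Dp, le_refl] <;> gcongr <;> apply_assumption

set_option maxHeartbeats 2000000 in
lemma Dm_mono (x y x' y' : Fin 5 → ℝ) (hx : ∀ j, 0 ≤ x j) (hy : ∀ j, 0 ≤ y j)
    (hxx : ∀ j, x j ≤ x' j) (hyy : ∀ j, y j ≤ y' j) (i j : Fin 5) :
    Dm x y i j ≤ Dm x' y' i j := by
  have hx' : ∀ j, 0 ≤ x' j := fun j => (hx j).trans (hxx j)
  have hy' : ∀ j, 0 ≤ y' j := fun j => (hy j).trans (hyy j)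
  have a0 := hx 0
  have a1 := hx 1
  have a2 := hx 2
  have a3 := hx 3
  have a4 := hx 4
  have b0 := hy 0
  have b1 := hy 1
  have b2 := hy 2
  have b3 := hy 3
  have b4 := hy 4
  have c0 := hx' 0
  have c1 := hx' 1
  have c2 := hx' 2
  have c3 := hx' 3
  have c4 := hx' 4
  have d0 := hy' 0
  have d1 := hy' 1
  have d2 := hy' 2
  have d3 := hy' 3
  have d4 := hy' 4
  revert i j
  apply forall5 <;> apply forall5 <;> simp only [Dm, le_refl] <;> gcongr <;> apply_assumption

/-- A quantitative Newton (Krawczyk) existence test. -/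
lemma newton_box (c lo hi : Fin 5 → ℝ) (A M : Fin 5 → Fin 5 → ℝ) (r ρ ε α : ℝ) (hr : 0 < r)
    (hlo0 : ∀ j, 0 < lo j) (hlo : ∀ j, lo j = c j - r) (hhi : ∀ j, hi j = c j + r)
    (hU : ∀ i j, Dp hi hi i j - Dm lo lo i j ≤ M i j + ρ)
    (hL : ∀ i j, M i j - ρ ≤ Dp lo lo i j - Dm hi hi i j)
    (hAM : ∀ k j, |∑ i, A k i * M i j - (if k = j then 1 else 0)| ≤ ε)
    (hA : ∀ k i, |A k i| ≤ α)
    (hc : ∀ k, |∑ i, A k i * sysF c i| ≤ r / 2)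
    (htot : 5 * ε + 25 * α * ρ ≤ 1 / 2) :
    ∃ x : Fin 5 → ℝ, sysF x = 0 ∧ ∀ j, lo j ≤ x j ∧ x j ≤ hi j := by
  have hα : 0 ≤ α := (abs_nonneg _).trans (hA 0 0)
  have hε : 0 ≤ ε := (abs_nonneg _).trans (hAM 0 0)
  have hρ : 0 ≤ ρ := by
    have h1 := hU 0 0
    have h2 := hL 0 0
    have hl : ∀ j, lo j ≤ hi j := fun j => by rw [hlo, hhi]; linarith
    have h0 : ∀ j, 0 ≤ lo j := fun j => (hlo0 j).le
    have h3 := Dp_mono lo lo hi hi h0 h0 hl hl 0 0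
    have h4 := Dm_mono lo lo hi hi h0 h0 hl hl 0 0
    linarith
  have hball : ∀ x ∈ Metric.closedBall c r, ∀ j, lo j ≤ x j ∧ x j ≤ hi j := by
    intro x hx j
    rw [mem_closedBall_iff_norm, pi_norm_le_iff_of_nonneg hr.le] at hx
    have := hx j
    rw [Pi.sub_apply, Real.norm_eq_abs, abs_le] at this
    rw [hlo, hhi]
    constructor <;> linarith
  have hD : ∀ x ∈ Metric.closedBall c r, ∀ y ∈ Metric.closedBall c r, ∀ i j,
      |(Dp x y i j - Dm x y i j) - M i j| ≤ ρ := by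
    intro x hx y hy i j
    have bx := hball x hx
    have bz := hball y hy
    have h0 : ∀ j, 0 ≤ lo j := fun j => (hlo0 j).le
    have hx0 : ∀ j, 0 ≤ x j := fun j => (h0 j).trans (bx j).1
    have hy0 : ∀ j, 0 ≤ y j := fun j => (h0 j).trans (bz j).1
    have e1 := Dp_mono lo lo x y h0 h0 (fun j => (bx j).1) (fun j => (bz j).1) i j
    have e2 := Dm_mono lo lo x y h0 h0 (fun j => (bx j).1) (fun j => (bz j).1) i j
    have e3 := Dp_mono x y hi hi hx0 hy0 (fun j => (bx j).2) (fun j => (bz j).2) i j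
    have e4 := Dm_mono x y hi hi hx0 hy0 (fun j => (bx j).2) (fun j => (bz j).2) i j
    have e5 := hU i j
    have e6 := hL i j
    rw [abs_le]
    constructor <;> linarith
  -- the preconditioned map
  let T : (Fin 5 → ℝ) → (Fin 5 → ℝ) := fun x k => x k - ∑ i, A k i * sysF x i
  have hlip : ∀ x ∈ Metric.closedBall c r, ∀ y ∈ Metric.closedBall c r,
      dist (T x) (T y) ≤ 1 / 2 * dist x y := by
    intro x hx y hy
    rw [dist_pi_le_iff (by positivity)]
    intro k
    have hrep : T x k - T y k
        = -∑ j, ((∑ i, A k i * M i j - (if k = j then 1 else 0))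
            + ∑ i, A k i * ((Dp x y i j - Dm x y i j) - M i j)) * (x j - y j) := by
      have h1 : ∀ j, ((∑ i, A k i * M i j - (if k = j then 1 else 0))
            + ∑ i, A k i * ((Dp x y i j - Dm x y i j) - M i j)) * (x j - y j)
          = (∑ i, A k i * ((Dp x y i j - Dm x y i j) * (x j - y j)))
            - (if k = j then (x j - y j) else 0) := by
        intro j
        simp only [mul_sub, Finset.sum_sub_distrib, ← mul_assoc, ← Finset.sum_mul, add_mul, sub_mul]
        split_ifs <;> ring
      simp only [h1, Finset.sum_sub_distrib, Finset.sum_ite_eq, Finset.mem_univ, if_true]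
      rw [Finset.sum_comm]
      simp only [← Finset.mul_sum, ← sysF_sub, T]
      simp only [mul_sub, Finset.sum_sub_distrib]
      ring
    rw [Real.dist_eq, hrep, abs_neg]
    have hj : ∀ j ∈ (Finset.univ : Finset (Fin 5)),
        |((∑ i, A k i * M i j - (if k = j then 1 else 0))
            + ∑ i, A k i * ((Dp x y i j - Dm x y i j) - M i j)) * (x j - y j)|
          ≤ (ε + 5 * (α * ρ)) * dist x y := by
      intro j _
      rw [abs_mul]
      have hd : |x j - y j| ≤ dist x y := by
        rw [← Real.dist_eq]; exact dist_le_pi_dist x y j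
      have hs : |∑ i, A k i * ((Dp x y i j - Dm x y i j) - M i j)| ≤ 5 * (α * ρ) := by
        refine (Finset.abs_sum_le_sum_abs _ _).trans ?_
        have : ∀ i ∈ (Finset.univ : Finset (Fin 5)),
            |A k i * ((Dp x y i j - Dm x y i j) - M i j)| ≤ α * ρ := by
          intro i _
          rw [abs_mul]
          exact mul_le_mul (hA k i) (hD x hx y hy i j) (abs_nonneg _) hα
        refine (Finset.sum_le_card_nsmul _ _ _ this).trans ?_
        simp
      exact mul_le_mul ((abs_add_le _ _).trans (add_le_add (hAM k j) hs)) hd (abs_nonneg _)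
        (by positivity)
    refine (Finset.abs_sum_le_sum_abs _ _).trans ((Finset.sum_le_card_nsmul _ _ _ hj).trans ?_)
    have hdn : 0 ≤ dist x y := dist_nonneg
    simp only [Finset.card_univ, Fintype.card_fin, nsmul_eq_mul]
    push_cast
    nlinarith
  have hcc : c ∈ Metric.closedBall c r := Metric.mem_closedBall_self hr.le
  have hTc : dist (T c) c ≤ r / 2 := by
    rw [dist_pi_le_iff (by positivity)]
    intro k
    rw [Real.dist_eq]
    have : T c k - c k = -∑ i, A k i * sysF c i := by simp only [T]; ring
    rw [this, abs_neg]
    exact hc k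
  have hmaps : Set.MapsTo T (Metric.closedBall c r) (Metric.closedBall c r) := by
    intro x hx
    have h1 := hlip x hx c hcc
    have h2 := dist_triangle (T x) (T c) c
    rw [Metric.mem_closedBall] at hx ⊢
    linarith
  have hcontr : ContractingWith (1 / 2 : NNReal) (hmaps.restrict T _ _) := by
    refine ⟨by rw [div_lt_one] <;> norm_num, LipschitzWith.of_dist_le_mul ?_⟩
    rintro ⟨x, hx⟩ ⟨y, hy⟩
    have := hlip x hx y hy
    simpa [Subtype.dist_eq] using this
  obtain ⟨x, hx, hfix, -⟩ := ContractingWith.exists_fixedPoint'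
    (Metric.isClosed_closedBall.isComplete) hmaps hcontr hcc (edist_ne_top _ _)
  refine ⟨x, ?_, hball x hx⟩
  have hAx : ∀ k, ∑ i, A k i * sysF x i = 0 := by
    intro k
    have h : T x k = x k := congrFun hfix k
    simp only [T] at h
    linarith
  have hdet : (Matrix.of A * Matrix.of M).det ≠ 0 := by
    apply det_ne_zero_of_sum_row_lt_diag
    intro k
    have hk := hAM k k
    rw [if_pos rfl, abs_le] at hk
    have hs : ∀ j ∈ Finset.univ.erase k, ‖(Matrix.of A * Matrix.of M) k j‖ ≤ ε := by
      intro j hj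
      have := hAM k j
      rw [if_neg (Finset.ne_of_mem_erase hj).symm, sub_zero] at this
      simpa [Matrix.mul_apply] using this
    have h2 := Finset.sum_le_card_nsmul _ _ _ hs
    have h3 : (Finset.univ.erase k).card = 4 := by simp
    rw [h3, nsmul_eq_mul] at h2
    push_cast at h2
    have h4 : 1 - ε ≤ ‖(Matrix.of A * Matrix.of M) k k‖ := by
      rw [Real.norm_eq_abs, Matrix.mul_apply]
      refine le_trans ?_ (le_abs_self _)
      simp only [Matrix.of_apply]
      linarith
    have : 0 ≤ α * ρ := by positivity
    linarith
  rw [Matrix.det_mul] at hdet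
  exact Matrix.eq_zero_of_mulVec_eq_zero (left_ne_zero_of_mul hdet)
    (by ext k; simpa [Matrix.mulVec, dotProduct] using hAx k)

lemma finish {lo hi : Fin 5 → ℝ} {a0 b0 a1 b1 a2 b2 a3 b3 a4 b4 : ℝ} (x : Fin 5 → ℝ)
    (hx : sysF x = 0) (hb : ∀ j, lo j ≤ x j ∧ x j ≤ hi j)
    (h0 : a0 < lo 0) (k0 : hi 0 < b0) (h1 : a1 < lo 1) (k1 : hi 1 < b1)
    (h2 : a2 < lo 2) (k2 : hi 2 < b2) (h3 : a3 < lo 3) (k3 : hi 3 < b3)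
    (h4 : a4 < lo 4) (k4 : hi 4 < b4) :
    ∃ u0 u1 u2 u3 x2 x3 : ℝ,
      u2 = u3 ∧ a0 < u0 ∧ u0 < b0 ∧ a1 < u1 ∧ u1 < b1 ∧ a2 < u2 ∧ u2 < b2 ∧ a3 < x2 ∧ x2 < b3 ∧ a4 < x3 ∧ x3 < b4 ∧
      g0 u0 u1 u2 u3 x2 x3 = 0 ∧ g1 u0 u1 u2 u3 x2 x3 = 0 ∧ g2 u0 u1 u2 u3 x2 x3 = 0 ∧ g3 u0 u1 u2 u3 x2 x3 = 0 ∧ g4 u0 u1 u2 u3 x2 x3 = 0 ∧ g5 u0 u1 u2 u3 x2 x3 = 0 := by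
  have e0 := congrFun hx 0
  have e1 := congrFun hx 1
  have e2 := congrFun hx 2
  have e3 := congrFun hx 3
  have e4 := congrFun hx 4
  simp [sysF] at e0 e1 e2 e3 e4
  refine ⟨x 0, x 1, x 2, x 2, x 3, x 4, rfl, h0.trans_le (hb 0).1, (hb 0).2.trans_lt k0,
    h1.trans_le (hb 1).1, (hb 1).2.trans_lt k1, h2.trans_le (hb 2).1, (hb 2).2.trans_lt k2,
    h3.trans_le (hb 3).1, (hb 3).2.trans_lt k3, h4.trans_le (hb 4).1, (hb 4).2.trans_lt k4,
    ?_, ?_, ?_, ?_, ?_, ?_⟩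
  · unfold g0; linear_combination e0
  · unfold g1; linear_combination e1
  · unfold g2; ring
  · unfold g3; linear_combination e2
  · unfold g4; linear_combination e3
  · unfold g5; linear_combination e4

noncomputable def cc0 : Fin 5 → ℝ
  | 0 => 0.1948662
  | 1 => 0.15924707
  | 2 => 0.17659278
  | 3 => 1.00169574
  | 4 => 0.18639713

noncomputable def lo0 : Fin 5 → ℝ
  | 0 => 0.1948661
  | 1 => 0.15924697
  | 2 => 0.17659268
  | 3 => 1.00169564
  | 4 => 0.18639703

noncomputable def hi0 : Fin 5 → ℝ
  | 0 => 0.1948663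
  | 1 => 0.15924717
  | 2 => 0.17659288
  | 3 => 1.00169584
  | 4 => 0.18639723

noncomputable def mA0 : Fin 5 → Fin 5 → ℝ
  | 0, 0 => -3.30233 | 0, 1 => 49.11864 | 0, 2 => 0.23788 | 0, 3 => 0.0541 | 0, 4 => 0.30473
  | 1, 0 => 3.20619 | 1, 1 => -48.64184 | 1, 2 => -0.24343 | 1, 3 => -0.04312 | 1, 4 => -0.18722
  | 2, 0 => -0.04048 | 2, 1 => 0.20041 | 2, 2 => -0.06077 | 2, 3 => -0.00514 | 2, 4 => 0.00296
  | 3, 0 => -0.37774 | 3, 1 => 4.66573 | 3, 2 => 0.02296 | 3, 3 => -0.02888 | 3, 4 => 0.02421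
  | 4, 0 => -2.75827 | 4, 1 => 20.34913 | 4, 2 => 0.09608 | 4, 3 => 0.02628 | 4, 4 => 0.16216

noncomputable def mM0 : Fin 5 → Fin 5 → ℝ
  | 0, 0 => 0.5292 | 0, 1 => 0.2281 | 0, 2 => 0 | 0, 3 => -0.0129 | 0, 4 => -0.7293
  | 1, 0 => 0 | 1, 1 => -0.0403 | 1, 2 => 0.0855 | 1, 3 => 0.001 | 1, 4 => -0.0482
  | 2, 0 => 0.033 | 2, 1 => 0.2973 | 2, 2 => -16.2254 | 2, 3 => 2.6697 | 2, 4 => 0.1785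
  | 3, 0 => 0.5586 | 3, 1 => -1.6833 | 3, 2 => -0.0202 | 3, 3 => -29.746 | 3, 4 => 1.4486
  | 4, 0 => 8.8916 | 4, 1 => 9.0305 | 4, 2 => -1.1118 | 4, 3 => 2.8901 | 4, 4 => -0.5278

lemma case0 : ∃ x : Fin 5 → ℝ, sysF x = 0 ∧ ∀ j, lo0 j ≤ x j ∧ x j ≤ hi0 j := by
  refine newton_box cc0 lo0 hi0 mA0 mM0 (1 / 10 ^ 7) 0.00013 0.002 50
    (by norm_num) ?_ ?_ ?_ ?_ ?_ ?_ ?_ ?_ (by norm_num)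
  · apply forall5 <;> norm_num [lo0]
  · apply forall5 <;> norm_num [lo0, cc0]
  · apply forall5 <;> norm_num [hi0, cc0]
  · apply forall5 <;> apply forall5 <;> simp only [Dp, Dm, lo0, hi0, mM0] <;> norm_num1
  · apply forall5 <;> apply forall5 <;> simp only [Dp, Dm, lo0, hi0, mM0] <;> norm_num1
  · apply forall5 <;> apply forall5 <;> rw [abs_le, Fin.sum_univ_five] <;> norm_num [mA0, mM0, Fin.ext_iff]
  · apply forall5 <;> apply forall5 <;> rw [abs_le] <;> norm_num [mA0]
  · apply forall5 <;> rw [abs_le, Fin.sum_univ_five] <;> simp only [sysF, mA0, cc0] <;> norm_num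

noncomputable def cc1 : Fin 5 → ℝ
  | 0 => 0.37393672
  | 1 => 0.21919659
  | 2 => 1.16266412
  | 3 => 1.00875195
  | 4 => 0.34082479

noncomputable def lo1 : Fin 5 → ℝ
  | 0 => 0.37393662
  | 1 => 0.21919649
  | 2 => 1.16266402
  | 3 => 1.00875185
  | 4 => 0.34082469

noncomputable def hi1 : Fin 5 → ℝ
  | 0 => 0.37393682
  | 1 => 0.21919669
  | 2 => 1.16266422
  | 3 => 1.00875205
  | 4 => 0.34082489

noncomputable def mA1 : Fin 5 → Fin 5 → ℝ
  | 0, 0 => -0.73421 | 0, 1 => 1.59724 | 0, 2 => 0.03473 | 0, 3 => 0.05917 | 0, 4 => 0.18248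
  | 1, 0 => 0.47676 | 1, 1 => -1.54506 | 1, 2 => -0.01674 | 1, 3 => -0.02169 | 1, 4 => -0.04602
  | 2, 0 => 0.0574 | 2, 1 => 0.10719 | 2, 2 => 0.03403 | 2, 3 => 0.00305 | 2, 4 => -0.00788
  | 3, 0 => -0.12047 | 3, 1 => 0.1611 | 3, 2 => 0.00283 | 3, 3 => -0.01629 | 3, 4 => 0.01424
  | 4, 0 => -1.14288 | 4, 1 => 0.38704 | 4, 2 => 0.01736 | 4, 3 => 0.0352 | 4, 4 => 0.11335

noncomputable def mM1 : Fin 5 → Fin 5 → ℝ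
  | 0, 0 => 0.8997 | 0, 1 => 0.6223 | 0, 2 => 0 | 0, 3 => -0.1133 | 0, 4 => -1.1814
  | 1, 0 => 0 | 1, 1 => -0.7235 | 1, 2 => -0.2027 | 1, 3 => 0.2047 | 1, 4 => -0.3336
  | 2, 0 => 0.4032 | 2, 1 => 3.6291 | 2, 2 => 29.1832 | 2, 3 => 6.4997 | 2, 4 => 2.0354
  | 3, 0 => 1.0165 | 3, 1 => -3.1213 | 3, 2 => -0.1917 | 3, 3 => -47.0931 | 3, 4 => 2.9995
  | 4, 0 => 8.6936 | 4, 1 => 9.1582 | 4, 2 => -3.7172 | 4, 3 => 11.7868 | 4, 4 => -3.1937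

lemma case1 : ∃ x : Fin 5 → ℝ, sysF x = 0 ∧ ∀ j, lo1 j ≤ x j ∧ x j ≤ hi1 j := by
  refine newton_box cc1 lo1 hi1 mA1 mM1 (1 / 10 ^ 7) 0.00016 0.001 2
    (by norm_num) ?_ ?_ ?_ ?_ ?_ ?_ ?_ ?_ (by norm_num)
  · apply forall5 <;> norm_num [lo1]
  · apply forall5 <;> norm_num [lo1, cc1]
  · apply forall5 <;> norm_num [hi1, cc1]
  · apply forall5 <;> apply forall5 <;> simp only [Dp, Dm, lo1, hi1, mM1] <;> norm_num1
  · apply forall5 <;> apply forall5 <;> simp only [Dp, Dm, lo1, hi1, mM1] <;> norm_num1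
  · apply forall5 <;> apply forall5 <;> rw [abs_le, Fin.sum_univ_five] <;> norm_num [mA1, mM1, Fin.ext_iff]
  · apply forall5 <;> apply forall5 <;> rw [abs_le] <;> norm_num [mA1]
  · apply forall5 <;> rw [abs_le, Fin.sum_univ_five] <;> simp only [sysF, mA1, cc1] <;> norm_num

noncomputable def cc2 : Fin 5 → ℝ
  | 0 => 0.84212893
  | 1 => 0.1087219
  | 2 => 0.17861096
  | 3 => 0.58058297
  | 4 => 1.14080766

noncomputable def lo2 : Fin 5 → ℝ
  | 0 => 0.84212883
  | 1 => 0.1087218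
  | 2 => 0.17861086
  | 3 => 0.58058287
  | 4 => 1.14080756

noncomputable def hi2 : Fin 5 → ℝ
  | 0 => 0.84212903
  | 1 => 0.108722
  | 2 => 0.17861106
  | 3 => 0.58058307
  | 4 => 1.14080776

noncomputable def mA2 : Fin 5 → Fin 5 → ℝ
  | 0, 0 => 0.64998 | 0, 1 => 3.52994 | 0, 2 => 0.13269 | 0, 3 => 0.06454 | 0, 4 => -0.00226
  | 1, 0 => -0.00301 | 1, 1 => -0.76336 | 1, 2 => -0.01571 | 1, 3 => 0.00085 | 1, 4 => -0.00039
  | 2, 0 => 0.0023 | 2, 1 => -0.00233 | 2, 2 => -0.03225 | 2, 3 => -0.00048 | 2, 4 => -0.00078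
  | 3, 0 => -0.12201 | 3, 1 => -0.76117 | 3, 2 => 0.0094 | 3, 3 => 0.03159 | 3, 4 => -0.00083
  | 4, 0 => -0.03966 | 4, 1 => -0.25715 | 4, 2 => 0.02344 | 4, 3 => -0.00141 | 4, 4 => -0.0221

noncomputable def mM2 : Fin 5 → Fin 5 → ℝ
  | 0, 0 => 1.102 | 0, 1 => 7.604 | 0, 2 => 0 | 0, 3 => -2.4628 | 0, 4 => -0.1553
  | 1, 0 => 0 | 1, 1 => -1.3582 | 1, 2 => 0.6742 | 1, 3 => 0.0466 | 1, 4 => -0.0012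
  | 2, 0 => 0.0687 | 2, 1 => 0.6181 | 2, 2 => -30.4149 | 2, 3 => -0.5701 | 2, 4 => 1.0714
  | 3, 0 => 4.1787 | 3, 1 => -3.4609 | 3, 2 => 24.2006 | 3, 3 => 23.4844 | 3, 4 => -2.0988
  | 4, 0 => -2.1721 | 4, 1 => 3.0337 | 4, 2 => -41.6461 | 4, 3 => 1.7715 | 4, 4 => -43.6881

lemma case2 : ∃ x : Fin 5 → ℝ, sysF x = 0 ∧ ∀ j, lo2 j ≤ x j ∧ x j ≤ hi2 j := by
  refine newton_box cc2 lo2 hi2 mA2 mM2 (1 / 10 ^ 7) 0.00016 0.001 4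
    (by norm_num) ?_ ?_ ?_ ?_ ?_ ?_ ?_ ?_ (by norm_num)
  · apply forall5 <;> norm_num [lo2]
  · apply forall5 <;> norm_num [lo2, cc2]
  · apply forall5 <;> norm_num [hi2, cc2]
  · apply forall5 <;> apply forall5 <;> simp only [Dp, Dm, lo2, hi2, mM2] <;> norm_num1
  · apply forall5 <;> apply forall5 <;> simp only [Dp, Dm, lo2, hi2, mM2] <;> norm_num1
  · apply forall5 <;> apply forall5 <;> rw [abs_le, Fin.sum_univ_five] <;> norm_num [mA2, mM2, Fin.ext_iff]
  · apply forall5 <;> apply forall5 <;> rw [abs_le] <;> norm_num [mA2]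
  · apply forall5 <;> rw [abs_le, Fin.sum_univ_five] <;> simp only [sysF, mA2, cc2] <;> norm_num

noncomputable def cc3 : Fin 5 → ℝ
  | 0 => 1.50462683
  | 1 => 1.40176919
  | 2 => 0.23783921
  | 3 => 1.05504418
  | 4 => 1.48120958

noncomputable def lo3 : Fin 5 → ℝ
  | 0 => 1.50462673
  | 1 => 1.40176909
  | 2 => 0.23783911
  | 3 => 1.05504408
  | 4 => 1.48120948

noncomputable def hi3 : Fin 5 → ℝ
  | 0 => 1.50462693
  | 1 => 1.40176929
  | 2 => 0.23783931
  | 3 => 1.05504428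
  | 4 => 1.48120968

noncomputable def mA3 : Fin 5 → Fin 5 → ℝ
  | 0, 0 => 0.09196 | 0, 1 => -0.48705 | 0, 2 => -0.13701 | 0, 3 => -0.46148 | 0, 4 => -0.03611
  | 1, 0 => -0.02187 | 1, 1 => 0.32081 | 1, 2 => 0.10778 | 1, 3 => 0.15749 | 1, 4 => 0.01205
  | 2, 0 => 0.00382 | 2, 1 => -0.02999 | 2, 2 => -0.01939 | 2, 3 => -0.02744 | 2, 4 => -0.00223
  | 3, 0 => 0.04555 | 3, 1 => -0.43106 | 3, 2 => -0.13041 | 3, 3 => -0.33647 | 3, 4 => -0.02548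
  | 4, 0 => 0.04672 | 4, 1 => -0.43445 | 4, 2 => -0.12594 | 4, 3 => -0.34399 | 4, 4 => -0.03249

noncomputable def mM3 : Fin 5 → Fin 5 → ℝ
  | 0, 0 => 33.4038 | 0, 1 => -28.8861 | 0, 2 => 0 | 0, 3 => -52.6319 | 0, 4 => -6.5567
  | 1, 0 => 0 | 1, 1 => 6.8702 | 1, 2 => 36.101 | 1, 3 => 0.9894 | 1, 4 => -0.7024
  | 2, 0 => 0.3921 | 2, 1 => 3.5293 | 2, 2 => -91.7738 | 2, 3 => 6.437 | 2, 4 => 2.1151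
  | 3, 0 => 4.2761 | 3, 1 => -14.8389 | 3, 2 => -5.3617 | 3, 3 => -26.4138 | 3, 4 => 10.8268
  | 4, 0 => 1.2421 | 4, 1 => 10.0181 | 4, 2 => -70.2074 | 4, 3 => 165.7653 | 4, 4 => -153.6203

lemma case3 : ∃ x : Fin 5 → ℝ, sysF x = 0 ∧ ∀ j, lo3 j ≤ x j ∧ x j ≤ hi3 j := by
  refine newton_box cc3 lo3 hi3 mA3 mM3 (1 / 10 ^ 7) 0.00033 0.001 1
    (by norm_num) ?_ ?_ ?_ ?_ ?_ ?_ ?_ ?_ (by norm_num)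
  · apply forall5 <;> norm_num [lo3]
  · apply forall5 <;> norm_num [lo3, cc3]
  · apply forall5 <;> norm_num [hi3, cc3]
  · apply forall5 <;> apply forall5 <;> simp only [Dp, Dm, lo3, hi3, mM3] <;> norm_num1
  · apply forall5 <;> apply forall5 <;> simp only [Dp, Dm, lo3, hi3, mM3] <;> norm_num1
  · apply forall5 <;> apply forall5 <;> rw [abs_le, Fin.sum_univ_five] <;> norm_num [mA3, mM3, Fin.ext_iff]
  · apply forall5 <;> apply forall5 <;> rw [abs_le] <;> norm_num [mA3]
  · apply forall5 <;> rw [abs_le, Fin.sum_univ_five] <;> simp only [sysF, mA3, cc3] <;> norm_num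

noncomputable def cc4 : Fin 5 → ℝ
  | 0 => 2.36535722
  | 1 => 0.16989789
  | 2 => 0.26106774
  | 3 => 1.69155622
  | 4 => 2.35877398

noncomputable def lo4 : Fin 5 → ℝ
  | 0 => 2.36535712
  | 1 => 0.16989779
  | 2 => 0.26106764
  | 3 => 1.69155612
  | 4 => 2.35877388

noncomputable def hi4 : Fin 5 → ℝ
  | 0 => 2.36535732
  | 1 => 0.16989799
  | 2 => 0.26106784
  | 3 => 1.69155632
  | 4 => 2.35877408

noncomputable def mA4 : Fin 5 → Fin 5 → ℝ
  | 0, 0 => 0.06364 | 0, 1 => 0.25465 | 0, 2 => 0.02099 | 0, 3 => -0.00225 | 0, 4 => -0.00032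
  | 1, 0 => 0.00027 | 1, 1 => -0.02245 | 1, 2 => -0.00153 | 1, 3 => -0.00047 | 1, 4 => -0.00004
  | 2, 0 => 0.00043 | 2, 1 => 0.00172 | 2, 2 => -0.00251 | 2, 3 => -0.00072 | 2, 4 => -0.00007
  | 3, 0 => 0.00064 | 3, 1 => 0.01103 | 3, 2 => 0.00328 | 3, 3 => -0.0053 | 3, 4 => -0.00037
  | 4, 0 => 0.00138 | 4, 1 => 0.01984 | 4, 2 => 0.00664 | 4, 3 => -0.00936 | 4, 4 => -0.00218

noncomputable def mM4 : Fin 5 → Fin 5 → ℝ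
  | 0, 0 => 15.2445 | 0, 1 => 162.5785 | 0, 2 => 0 | 0, 3 => -15.8618 | 0, 4 => -2.8549
  | 1, 0 => 0 | 1, 1 => -42.444 | 1, 2 => 26.1043 | 1, 3 => 0.2285 | 1, 4 => -0.0183
  | 2, 0 => 1.762 | 2, 1 => 15.8582 | 2, 2 => -334.4465 | 2, 3 => 36.2005 | 2, 4 => 4.159
  | 3, 0 => 2.6858 | 3, 1 => -60.7438 | 3, 2 => -140.4971 | 3, 3 => -250.0974 | 3, 4 => 47.9672
  | 4, 0 => 3.497 | 4, 1 => 25.7523 | 4, 2 => -178.0421 | 4, 3 => 1177.7083 | 4, 4 => -654.9768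

lemma case4 : ∃ x : Fin 5 → ℝ, sysF x = 0 ∧ ∀ j, lo4 j ≤ x j ∧ x j ≤ hi4 j := by
  refine newton_box cc4 lo4 hi4 mA4 mM4 (1 / 10 ^ 7) 0.00077 0.006 1
    (by norm_num) ?_ ?_ ?_ ?_ ?_ ?_ ?_ ?_ (by norm_num)
  · apply forall5 <;> norm_num [lo4]
  · apply forall5 <;> norm_num [lo4, cc4]
  · apply forall5 <;> norm_num [hi4, cc4]
  · apply forall5 <;> apply forall5 <;> simp only [Dp, Dm, lo4, hi4, mM4] <;> norm_num1
  · apply forall5 <;> apply forall5 <;> simp only [Dp, Dm, lo4, hi4, mM4] <;> norm_num1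
  · apply forall5 <;> apply forall5 <;> rw [abs_le, Fin.sum_univ_five] <;> norm_num [mA4, mM4, Fin.ext_iff]
  · apply forall5 <;> apply forall5 <;> rw [abs_le] <;> norm_num [mA4]
  · apply forall5 <;> rw [abs_le, Fin.sum_univ_five] <;> simp only [sysF, mA4, cc4] <;> norm_num

theorem stmt19 :
    (∃ u0 u1 u2 u3 x2 x3 : ℝ,
      u2 = u3 ∧ 0.19 < u0 ∧ u0 < 0.20 ∧ 0.15 < u1 ∧ u1 < 0.16 ∧ 0.17 < u2 ∧ u2 < 0.18 ∧ 1.001 < x2 ∧ x2 < 1.002 ∧ 0.186 < x3 ∧ x3 < 0.187 ∧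
      g0 u0 u1 u2 u3 x2 x3 = 0 ∧ g1 u0 u1 u2 u3 x2 x3 = 0 ∧ g2 u0 u1 u2 u3 x2 x3 = 0 ∧ g3 u0 u1 u2 u3 x2 x3 = 0 ∧ g4 u0 u1 u2 u3 x2 x3 = 0 ∧ g5 u0 u1 u2 u3 x2 x3 = 0) ∧
    (∃ u0 u1 u2 u3 x2 x3 : ℝ,
      u2 = u3 ∧ 0.37 < u0 ∧ u0 < 0.38 ∧ 0.21 < u1 ∧ u1 < 0.22 ∧ 1.16 < u2 ∧ u2 < 1.17 ∧ 1.008 < x2 ∧ x2 < 1.009 ∧ 0.340 < x3 ∧ x3 < 0.341 ∧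
      g0 u0 u1 u2 u3 x2 x3 = 0 ∧ g1 u0 u1 u2 u3 x2 x3 = 0 ∧ g2 u0 u1 u2 u3 x2 x3 = 0 ∧ g3 u0 u1 u2 u3 x2 x3 = 0 ∧ g4 u0 u1 u2 u3 x2 x3 = 0 ∧ g5 u0 u1 u2 u3 x2 x3 = 0) ∧
    (∃ u0 u1 u2 u3 x2 x3 : ℝ,
      u2 = u3 ∧ 0.84 < u0 ∧ u0 < 0.85 ∧ 0.108 < u1 ∧ u1 < 0.109 ∧ 0.178 < u2 ∧ u2 < 0.179 ∧ 0.58 < x2 ∧ x2 < 0.59 ∧ 1.14 < x3 ∧ x3 < 1.15 ∧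
      g0 u0 u1 u2 u3 x2 x3 = 0 ∧ g1 u0 u1 u2 u3 x2 x3 = 0 ∧ g2 u0 u1 u2 u3 x2 x3 = 0 ∧ g3 u0 u1 u2 u3 x2 x3 = 0 ∧ g4 u0 u1 u2 u3 x2 x3 = 0 ∧ g5 u0 u1 u2 u3 x2 x3 = 0) ∧
    (∃ u0 u1 u2 u3 x2 x3 : ℝ,
      u2 = u3 ∧ 1.50 < u0 ∧ u0 < 1.51 ∧ 1.40 < u1 ∧ u1 < 1.41 ∧ 0.23 < u2 ∧ u2 < 0.24 ∧ 1.05 < x2 ∧ x2 < 1.06 ∧ 1.48 < x3 ∧ x3 < 1.49 ∧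
      g0 u0 u1 u2 u3 x2 x3 = 0 ∧ g1 u0 u1 u2 u3 x2 x3 = 0 ∧ g2 u0 u1 u2 u3 x2 x3 = 0 ∧ g3 u0 u1 u2 u3 x2 x3 = 0 ∧ g4 u0 u1 u2 u3 x2 x3 = 0 ∧ g5 u0 u1 u2 u3 x2 x3 = 0) ∧
    (∃ u0 u1 u2 u3 x2 x3 : ℝ,
      u2 = u3 ∧ 2.36 < u0 ∧ u0 < 2.37 ∧ 0.169 < u1 ∧ u1 < 0.170 ∧ 0.26 < u2 ∧ u2 < 0.27 ∧ 1.69 < x2 ∧ x2 < 1.70 ∧ 2.35 < x3 ∧ x3 < 2.36 ∧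
      g0 u0 u1 u2 u3 x2 x3 = 0 ∧ g1 u0 u1 u2 u3 x2 x3 = 0 ∧ g2 u0 u1 u2 u3 x2 x3 = 0 ∧ g3 u0 u1 u2 u3 x2 x3 = 0 ∧ g4 u0 u1 u2 u3 x2 x3 = 0 ∧ g5 u0 u1 u2 u3 x2 x3 = 0) := by
  refine ⟨?_, ?_, ?_, ?_, ?_⟩
  · obtain ⟨x, hx, hb⟩ := case0
    apply finish x hx hb <;> norm_num [lo0, hi0]
  · obtain ⟨x, hx, hb⟩ := case1
    apply finish x hx hb <;> norm_num [lo1, hi1]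
  · obtain ⟨x, hx, hb⟩ := case2
    apply finish x hx hb <;> norm_num [lo2, hi2]
  · obtain ⟨x, hx, hb⟩ := case3
    apply finish x hx hb <;> norm_num [lo3, hi3]
  · obtain ⟨x, hx, hb⟩ := case4
    apply finish x hx hb <;> norm_num [lo4, hi4]
end
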